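/- arXiv:math/9911139 — 2 statements merged into one kernel-verified Lean document; each statement's English description precedes it below -/
import Mathlib

section
/- Fix nonzero complex numbers a and b, and a complex number x with x + x⁻¹ = 3. Define 3×3 complex matrices U = (u_{ij}) and W = (v^{ij}) whose only nonzero entries are u_{13} = a, u_{22} = b, u_{31} = −a/x and v^{13} = x/(2a), v^{22} = −1/(2b), v^{31} = −1/(2a). Then: (1) Σ_{i,j} u_{ij} v^{ij} = 1; (2) U W Uᵗ Wᵗ = (1/4)·Id; and (3) 2 Σ_j u_{ij} v^{jk} = −δ_i^k for all i, k, i.e. 2 U W = −Id. -/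
/-!
Condition (3) forces `W = -(1/2) U⁻¹`. A one-sided inverse of a square matrix is two-sided, so
`W U = -(1/2)·Id` as well, and `U W Uᵗ Wᵗ = (U W) (W U)ᵗ` gives (2). When `U` has entries
`u₁, …, uₙ` along its skew diagonal, (1) becomes `∑ uᵢ / u_{n+1-i} = -2`; for the entries
`a, b, -a/x` the left-hand side is `1 - (x + x⁻¹)`.
-/

open Matrix

section ScalarProduct

variable {n R : Type*} [Fintype n] [DecidableEq n] [CommRing R] {A B : Matrix n n R} {c : R}

theorem mul_eq_smul_one_symm (hc : IsUnit c) (h : A * B = c • 1) : B * A = c • 1 := by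
  obtain ⟨c, rfl⟩ := hc
  rw [← Units.smul_def] at h ⊢
  have hinv : A * (c⁻¹ • B) = 1 := by rw [mul_smul_comm, inv_smul_eq_iff, h]
  rw [← inv_smul_eq_iff, ← smul_mul_assoc]
  exact mul_eq_one_comm.mp hinv

theorem mul_mul_transpose_mul_transpose_of_mul_eq_smul_one (hc : IsUnit c)
    (h : A * B = c • 1) : A * B * Aᵀ * Bᵀ = c ^ 2 • (1 : Matrix n n R) :=
  calc
    A * B * Aᵀ * Bᵀ = (A * B) * (B * A)ᵀ := by rw [transpose_mul, Matrix.mul_assoc]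
    _ = (c • 1) * (c • 1)ᵀ := by rw [h, mul_eq_smul_one_symm hc h]
    _ = c ^ 2 • 1 := by simp [smul_smul, sq]

end ScalarProduct

section SkewDiagonal

variable {n : ℕ} {R : Type*}

/-- The skew-diagonal matrix with entries `d`, the common shape of `U` and `W`. The entries are
indexed by their row, so `d 0` stands in the top right corner. -/
def skewDiagonal [Zero R] (d : Fin n → R) : Matrix (Fin n) (Fin n) R :=
  of fun i j => if j = i.rev then d i else 0

theorem skewDiagonal_fin_three [Zero R] (p q r : R) :
    skewDiagonal ![p, q, r] = !![0, 0, p; 0, q, 0; r, 0, 0] := by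
  ext i j
  fin_cases i <;> fin_cases j <;> rfl

theorem skewDiagonal_mul_skewDiagonal [NonUnitalNonAssocSemiring R] (d e : Fin n → R) :
    skewDiagonal d * skewDiagonal e = diagonal fun i => d i * e i.rev := by
  ext i j
  rw [mul_apply, Fintype.sum_eq_single i.rev fun k hk => by simp [skewDiagonal, hk]]
  simp [skewDiagonal, diagonal_apply, eq_comm (a := j)]

theorem sum_sum_skewDiagonal_mul [NonUnitalNonAssocSemiring R] (d e : Fin n → R) :
    ∑ i, ∑ j, skewDiagonal d i j * skewDiagonal e i j = ∑ i, d i * e i := by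
  simp [skewDiagonal]

end SkewDiagonal

theorem sum_div_rev_fin_three {K : Type*} [Field K] {a b : K} (x : K) (ha : a ≠ 0) (hb : b ≠ 0) :
    ∑ i, ![a, b, -a / x] i / ![a, b, -a / x] i.rev = 1 - (x + x⁻¹) := by
  have h13 : a / (-a / x) = -x := by field_simp
  have h31 : -a / x / a = -x⁻¹ := by field_simp
  calc
    ∑ i, ![a, b, -a / x] i / ![a, b, -a / x] i.rev
        = a / (-a / x) + b / b + -a / x / a := Fin.sum_univ_three _
    _ = 1 - (x + x⁻¹) := by rw [h13, h31, div_self hb]; ring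

theorem skew_diagonal_family_general {n : ℕ} {K : Type*} [Field K] [NeZero (2 : K)]
    {u v : Fin n → K} (hu : ∀ i, u i ≠ 0) (hv : ∀ i, v i = -1 / (2 * u i.rev))
    (hsum : ∑ i, u i / u i.rev = -2) :
    ∑ i, ∑ j, skewDiagonal u i j * skewDiagonal v i j = 1 ∧
    skewDiagonal u * skewDiagonal v * (skewDiagonal u)ᵀ * (skewDiagonal v)ᵀ =
      (1 / 4 : K) • (1 : Matrix (Fin n) (Fin n) K) ∧
    (2 : K) • (skewDiagonal u * skewDiagonal v) = -(1 : Matrix (Fin n) (Fin n) K) := by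
  have h2 : (2 : K) ≠ 0 := two_ne_zero
  have huv : skewDiagonal u * skewDiagonal v = (-1 / 2 : K) • 1 := by
    have hentry (i : Fin n) : u i * v i.rev = -1 / 2 := by
      rw [hv, Fin.rev_rev]
      field_simp [hu i]
    simp_rw [skewDiagonal_mul_skewDiagonal, hentry, smul_one_eq_diagonal]
  refine ⟨?_, ?_, ?_⟩
  · calc
      ∑ i, ∑ j, skewDiagonal u i j * skewDiagonal v i j = ∑ i, u i * v i :=
        sum_sum_skewDiagonal_mul u v
      _ = ∑ i, (-1 / 2) * (u i / u i.rev) :=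
        Finset.sum_congr rfl fun i _ => by rw [hv]; field_simp [hu i.rev]
      _ = 1 := by rw [← Finset.mul_sum, hsum]; field_simp
  · have hunit : IsUnit (-1 / 2 : K) := (div_ne_zero (by simp) h2).isUnit
    rw [mul_mul_transpose_mul_transpose_of_mul_eq_smul_one hunit huv]
    congr 1
    norm_num [div_pow]
  · rw [huv, smul_smul, mul_div_cancel₀ _ h2, neg_one_smul]

/-- The two-parameter family of skew-diagonal solutions on `ℂ³`: with `x + x⁻¹ = 3`,
`u₁₃ = a`, `u₂₂ = b`, `u₃₁ = −a/x`, `v¹³ = x/(2a)`, `v²² = −1/(2b)`, `v³¹ = −1/(2a)`,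
one has (1) `Σ u_{ij} v^{ij} = 1`, (2) `U W Uᵗ Wᵗ = (1/4)·Id`, and (3) `2 U W = −Id`
(centrality of the determinant). -/
theorem skew_diagonal_family (a b x : ℂ) (ha : a ≠ 0) (hb : b ≠ 0)
    (hx : x + x⁻¹ = 3) :
    ∑ i, ∑ j, (!![0, 0, a; 0, b, 0; -a / x, 0, 0] : Matrix (Fin 3) (Fin 3) ℂ) i j *
        (!![0, 0, x / (2 * a); 0, -1 / (2 * b), 0; -1 / (2 * a), 0, 0] :
          Matrix (Fin 3) (Fin 3) ℂ) i j = 1 ∧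
    (!![0, 0, a; 0, b, 0; -a / x, 0, 0] : Matrix (Fin 3) (Fin 3) ℂ) *
        !![0, 0, x / (2 * a); 0, -1 / (2 * b), 0; -1 / (2 * a), 0, 0] *
        (!![0, 0, a; 0, b, 0; -a / x, 0, 0] : Matrix (Fin 3) (Fin 3) ℂ)ᵀ *
        (!![0, 0, x / (2 * a); 0, -1 / (2 * b), 0; -1 / (2 * a), 0, 0] :
          Matrix (Fin 3) (Fin 3) ℂ)ᵀ =
      (1 / 4 : ℂ) • (1 : Matrix (Fin 3) (Fin 3) ℂ) ∧
    (2 : ℂ) • ((!![0, 0, a; 0, b, 0; -a / x, 0, 0] : Matrix (Fin 3) (Fin 3) ℂ) *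
        !![0, 0, x / (2 * a); 0, -1 / (2 * b), 0; -1 / (2 * a), 0, 0]) =
      -(1 : Matrix (Fin 3) (Fin 3) ℂ) := by
  have hx0 : x ≠ 0 := by
    rintro rfl
    norm_num at hx
  have hsum : ∑ i, ![a, b, -a / x] i / ![a, b, -a / x] i.rev = -2 := by
    rw [sum_div_rev_fin_three x ha hb, hx]
    norm_num
  simp only [← skewDiagonal_fin_three]
  refine skew_diagonal_family_general ?_ ?_ hsum
  · simp [Fin.forall_fin_succ, ha, hb, hx0]
  · have hv13 : x / (2 * a) = -1 / (2 * (-a / x)) := by field_simp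
    simpa [Fin.forall_fin_succ] using hv13
end

section
/- Let n ≥ 3 be an integer and let α₁ = (n − √(n² − 4))/2 and α₂ = (n + √(n² − 4))/2 be the two roots of t² − n t + 1 = 0, so that 0 < α₁ < 1 < α₂ and α₁ α₂ = 1. For each natural number l set m_l := (α₂^{2l+1} − α₁^{2l+1})/(α₂ − α₁) and λ_l := 2l² + 2l, and for real λ define N(λ) := Σ_{l ∈ ℕ, λ_l ≤ λ} m_l. Then, with β := 1/((α₂ − α₁)(α₂² − 1)) > 0, one has limsup_{λ → ∞} N(λ)·α₂^{−√(2λ)} = β·α₂² and liminf_{λ → ∞} N(λ)·α₂^{−√(2λ)} = β. In particular, N(λ) grows exponentially in √λ and N(λ)·α₂^{−√(2λ)} has no limit as λ → ∞. -/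
open Filter

/-!
Write `a = α₂` and `b = α₁ = a⁻¹`. The identity
`(a^(2l+1) - b^(2l+1)) (a - b) = (a^(l+1) - b^(l+1))² - (a^l - b^l)²` makes the sum of the
multiplicities telescope: if `λ_L ≤ λ < λ_{L+1}`, then
`N(λ) = ((a^(L+1) - b^(L+1)) / (a - b))² = β (a^(2L+3) - 2a + b^(2L+1))`,
so `N(λ) a^(-√(2λ))` is `β a^(2L+3-√(2λ))` up to a vanishing error.

Since `2λ_l + 1 = (2l+1)²`, the index `L` is determined by `2L+1 ≤ √(2λ+1) < 2L+3`, and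
`√(2λ+1) - √(2λ) → 0`; hence the exponent `2L+3-√(2λ)` oscillates asymptotically between `0`
and `2`. The upper end is approached along the eigenvalues `λ = λ_L`, the lower one along
`λ = λ_{L+1} - 1/2`, just before the next jump.
-/

open scoped Topology

section LimsupLiminf

variable {α ι R : Type*} [ConditionallyCompleteLinearOrder R] [TopologicalSpace R]
  [OrderTopology R] {l : Filter α} {l' : Filter ι} [NeBot l'] {f u : α → R} {x : ι → α} {A : R}

lemma limsup_eq_of_eventuallyLE_of_tendsto_comp (hfu : f ≤ᶠ[l] u) (hu : Tendsto u l (𝓝 A))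
    (hx : Tendsto x l' l) (hfx : Tendsto (f ∘ x) l' (𝓝 A)) : limsup f l = A := by
  have : NeBot l := hx.neBot
  have hbdd : IsBoundedUnder (· ≤ ·) l f := hu.isBoundedUnder_le.mono_le hfu
  have hcobdd : IsCoboundedUnder (· ≤ ·) (map x l') f := hfx.isCoboundedUnder_le
  refine le_antisymm ?_ ?_
  · rw [← hu.limsup_eq]
    exact limsup_le_limsup hfu (hcobdd.mono (map_mono hx)) hu.isBoundedUnder_le
  · rw [← hfx.limsup_eq]
    exact limsup_le_limsup_of_le hx hcobdd hbdd

lemma liminf_eq_of_eventuallyLE_of_tendsto_comp (huf : u ≤ᶠ[l] f) (hu : Tendsto u l (𝓝 A))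
    (hx : Tendsto x l' l) (hfx : Tendsto (f ∘ x) l' (𝓝 A)) : liminf f l = A :=
  limsup_eq_of_eventuallyLE_of_tendsto_comp (R := Rᵒᵈ) huf hu hx hfx

end LimsupLiminf

lemma const_mul_rpow_le_const_mul_rpow {a C x y : ℝ} (ha : 1 ≤ a) (hC : 0 ≤ C) (hxy : x ≤ y) :
    C * a ^ x ≤ C * a ^ y :=
  mul_le_mul_of_nonneg_left (Real.rpow_le_rpow_of_exponent_le ha hxy) hC

lemma tendsto_sqrt_add_sub_sqrt (c : ℝ) :
    Tendsto (fun x : ℝ => √(x + c) - √x) atTop (𝓝 0) := by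
  have hden : Tendsto (fun x : ℝ => √(x + c) + √x) atTop atTop :=
    tendsto_atTop_mono (fun _ => le_add_of_nonneg_left (Real.sqrt_nonneg _)) Real.tendsto_sqrt_atTop
  refine (tendsto_const_nhds (x := c)).div_atTop hden |>.congr' ?_
  filter_upwards [eventually_gt_atTop 0, eventually_ge_atTop (-c)] with x hx hxc
  have hpos : 0 < √(x + c) + √x :=
    add_pos_of_nonneg_of_pos (Real.sqrt_nonneg _) (Real.sqrt_pos.2 hx)
  rw [div_eq_iff hpos.ne']
  linear_combination -Real.sq_sqrt (show 0 ≤ x + c by linarith) + Real.sq_sqrt hx.le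

lemma tendsto_sqrt_two_mul_atTop : Tendsto (fun x : ℝ => √(2 * x)) atTop atTop :=
  Real.tendsto_sqrt_atTop.comp (tendsto_id.const_mul_atTop two_pos)

lemma tendsto_const_mul_rpow_neg_sqrt {a : ℝ} (ha : 1 < a) (C : ℝ) :
    Tendsto (fun x : ℝ => C * a ^ (-√(2 * x))) atTop (𝓝 0) := by
  simpa only [mul_zero, Function.comp_def] using ((tendsto_rpow_atBot_of_base_gt_one a ha).comp
    (tendsto_neg_atTop_atBot.comp tendsto_sqrt_two_mul_atTop)).const_mul C

lemma tendsto_const_mul_rpow_add_sqrt_sub_sqrt {a : ℝ} (ha : a ≠ 0) (C d c : ℝ) :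
    Tendsto (fun x : ℝ => C * a ^ (d + (√(2 * x + c) - √(2 * x)))) atTop (𝓝 (C * a ^ d)) := by
  have hexp : Tendsto (fun x : ℝ => d + (√(2 * x + c) - √(2 * x))) atTop (𝓝 d) := by
    simpa only [add_zero, Function.comp_def, id] using ((tendsto_sqrt_add_sub_sqrt c).comp
      (tendsto_id.const_mul_atTop two_pos)).const_add d
  exact (((Real.continuous_const_rpow ha).tendsto d).comp hexp).const_mul C

/-- The counting function of a spectrum `ev 0, ev 1, …` with multiplicities `m 0, m 1, …`. The
multiplicities are real numbers because they are given by a closed formula; the sum has its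
intended meaning when only finitely many eigenvalues are at most `x`. -/
noncomputable def countingFunction (ev m : ℕ → ℝ) (x : ℝ) : ℝ :=
  ∑' l, if ev l ≤ x then m l else 0

lemma countingFunction_eq_sum_range {ev : ℕ → ℝ} (hev : Monotone ev) (m : ℕ → ℝ) {x : ℝ} {L : ℕ}
    (hx : x ∈ Set.Ico (ev L) (ev (L + 1))) :
    countingFunction ev m x = ∑ l ∈ Finset.range (L + 1), m l := by
  rw [countingFunction, tsum_eq_sum (s := Finset.range (L + 1))]
  · refine Finset.sum_congr rfl fun l hl => if_pos ?_
    exact (hev (Finset.mem_range_succ_iff.1 hl)).trans hx.1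
  · intro l hl
    exact if_neg (hx.2.trans_le (hev (by simpa using hl))).not_ge

/-- The eigenvalue `λ_l = (2l)² / 2 + 2l` of the twisted Casimir operator. -/
def casimirEigenvalue (l : ℕ) : ℝ := 2 * (l : ℝ) ^ 2 + 2 * (l : ℝ)

lemma two_mul_casimirEigenvalue_add_one (l : ℕ) :
    2 * casimirEigenvalue l + 1 = (2 * l + 1) ^ 2 := by
  rw [casimirEigenvalue]
  ring

lemma two_mul_casimirEigenvalue_succ_add_one (l : ℕ) :
    2 * casimirEigenvalue (l + 1) + 1 = (2 * l + 3) ^ 2 := by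
  rw [two_mul_casimirEigenvalue_add_one]
  push_cast
  ring

lemma casimirEigenvalue_strictMono : StrictMono casimirEigenvalue := by
  refine strictMono_nat_of_lt_succ fun l => ?_
  linarith [two_mul_casimirEigenvalue_add_one l, two_mul_casimirEigenvalue_succ_add_one l,
    l.cast_nonneg (α := ℝ)]

lemma tendsto_casimirEigenvalue_atTop : Tendsto casimirEigenvalue atTop atTop :=
  tendsto_atTop_mono (fun l => by rw [casimirEigenvalue]; nlinarith [l.cast_nonneg (α := ℝ)])
    tendsto_natCast_atTop_atTop

lemma exists_mem_Ico_casimirEigenvalue {x : ℝ} (hx : 0 ≤ x) :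
    ∃ L, x ∈ Set.Ico (casimirEigenvalue L) (casimirEigenvalue (L + 1)) := by
  have hunion := iUnion_Ico_map_succ_eq_Ici (f := casimirEigenvalue)
    (fun l => casimirEigenvalue_strictMono.monotone bot_le)
    (not_bddAbove_of_tendsto_atTop tendsto_casimirEigenvalue_atTop)
  have hmem : x ∈ Set.Ici (casimirEigenvalue ⊥) := by simpa [casimirEigenvalue] using hx
  rw [← hunion] at hmem
  exact Set.mem_iUnion.1 hmem

lemma two_mul_add_one_le_sqrt {x : ℝ} {L : ℕ} (hx : casimirEigenvalue L ≤ x) :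
    2 * (L : ℝ) + 1 ≤ √(2 * x + 1) :=
  Real.le_sqrt_of_sq_le (by linarith [two_mul_casimirEigenvalue_add_one L])

lemma sqrt_two_mul_le {x : ℝ} {L : ℕ} (hx : x < casimirEigenvalue (L + 1)) :
    √(2 * x) ≤ 2 * (L : ℝ) + 3 :=
  Real.sqrt_le_iff.2 ⟨by positivity, by linarith [two_mul_casimirEigenvalue_succ_add_one L]⟩

lemma sqrt_two_mul_casimirEigenvalue_le (L : ℕ) :
    √(2 * casimirEigenvalue L) ≤ 2 * (L : ℝ) + 1 :=
  Real.sqrt_le_iff.2 ⟨by positivity, by linarith [two_mul_casimirEigenvalue_add_one L]⟩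

lemma casimirEigenvalue_succ_sub_half_mem_Ico (L : ℕ) :
    casimirEigenvalue (L + 1) - 1 / 2 ∈
      Set.Ico (casimirEigenvalue L) (casimirEigenvalue (L + 1)) := by
  constructor <;>
    linarith [two_mul_casimirEigenvalue_add_one L, two_mul_casimirEigenvalue_succ_add_one L,
      L.cast_nonneg (α := ℝ)]

lemma sum_range_odd_pow_sub_pow_mul_sub {R : Type*} [CommRing R] {a b : R} (hab : a * b = 1)
    (k : ℕ) :
    (∑ l ∈ Finset.range k, (a ^ (2 * l + 1) - b ^ (2 * l + 1))) * (a - b) =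
      (a ^ k - b ^ k) ^ 2 := by
  induction k with
  | zero => simp
  | succ k ih =>
    have hpow (j : ℕ) : a ^ j * b ^ j = 1 := by rw [← mul_pow, hab, one_pow]
    rw [Finset.sum_range_succ, add_mul, ih]
    linear_combination (-a ^ (2 * k) - b ^ (2 * k)) * hab - 2 * hpow k + 2 * hpow (k + 1)

/-- The multiplicity `m_l` of `λ_l`, in terms of the roots `a = α₂` and `b = α₁`. -/
noncomputable def casimirMultiplicity (a b : ℝ) (l : ℕ) : ℝ :=
  (a ^ (2 * l + 1) - b ^ (2 * l + 1)) / (a - b)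

/-- The constant `β` of the Weyl-type formula, in terms of the roots `a = α₂` and `b = α₁`. -/
noncomputable def weylConstant (a b : ℝ) : ℝ := 1 / ((a - b) * (a ^ 2 - 1))

/-- The counting function of the twisted Casimir operator normalised by its order of growth,
`N(λ) α₂^(-√(2λ))`, in terms of the roots `a = α₂` and `b = α₁`. -/
noncomputable def weylRatio (a b x : ℝ) : ℝ :=
  countingFunction casimirEigenvalue (casimirMultiplicity a b) x * a ^ (-√(2 * x))

section WeylRatio

variable {a b : ℝ}

lemma weylConstant_pos (ha : 1 < a) (hab : a * b = 1) : 0 < weylConstant a b :=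
  one_div_pos.2 (mul_pos (by nlinarith) (by nlinarith))

lemma sum_range_casimirMultiplicity (ha : a ^ 2 ≠ 1) (hab : a * b = 1) (k : ℕ) :
    ∑ l ∈ Finset.range k, casimirMultiplicity a b l =
      weylConstant a b * (a * (a ^ k - b ^ k) ^ 2) := by
  have hsq : a ^ 2 - 1 ≠ 0 := sub_ne_zero.2 ha
  have hsub : a - b ≠ 0 := right_ne_zero_of_mul (a := a) (by rwa [mul_sub, hab, ← sq])
  simp only [casimirMultiplicity, weylConstant]
  rw [← Finset.sum_div, ← sum_range_odd_pow_sub_pow_mul_sub hab]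
  field_simp
  linear_combination (∑ l ∈ Finset.range k, (a ^ (2 * l + 1) - b ^ (2 * l + 1))) * hab

lemma pow_sub_pow_sq_mem_Icc (ha : 1 ≤ a) (hab : a * b = 1) (k : ℕ) :
    (a ^ k - b ^ k) ^ 2 ∈ Set.Icc (a ^ (2 * k) - 2) (a ^ (2 * k)) := by
  have hb : 0 < b := pos_of_mul_pos_right (hab ▸ one_pos) (by linarith)
  have hpow : a ^ k * b ^ k = 1 := by rw [← mul_pow, hab, one_pow]
  have hle : b ^ k ≤ 1 := pow_le_one₀ hb.le (by nlinarith)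
  have hpos : 0 < b ^ k := pow_pos hb k
  rw [mul_comm 2 k, pow_mul]
  constructor <;> nlinarith

lemma weylRatio_mem_Icc (ha : 1 < a) (hab : a * b = 1) {x : ℝ} {L : ℕ}
    (hx : x ∈ Set.Ico (casimirEigenvalue L) (casimirEigenvalue (L + 1))) :
    weylRatio a b x ∈ Set.Icc
      (weylConstant a b * a ^ (2 * L + 3 - √(2 * x)) -
        2 * a * weylConstant a b * a ^ (-√(2 * x)))
      (weylConstant a b * a ^ (2 * L + 3 - √(2 * x))) := by
  have ha₀ : 0 < a := by linarith
  have hsplit : a ^ (2 * L + 3 - √(2 * x)) = a * a ^ (2 * (L + 1)) * a ^ (-√(2 * x)) := by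
    rw [sub_eq_add_neg, Real.rpow_add ha₀, ← pow_succ', ← Real.rpow_natCast a]
    push_cast
    ring_nf
  have hscale : 0 ≤ weylConstant a b * a * a ^ (-√(2 * x)) :=
    mul_nonneg (mul_pos (weylConstant_pos ha hab) ha₀).le (Real.rpow_nonneg ha₀.le _)
  obtain ⟨hlow, hupp⟩ := pow_sub_pow_sq_mem_Icc ha.le hab (L + 1)
  rw [weylRatio, countingFunction_eq_sum_range casimirEigenvalue_strictMono.monotone _ hx,
    sum_range_casimirMultiplicity (one_lt_pow₀ ha two_ne_zero).ne' hab, hsplit]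
  constructor
  · linarith [mul_le_mul_of_nonneg_left hlow hscale]
  · linarith [mul_le_mul_of_nonneg_left hupp hscale]

lemma weylRatio_le (ha : 1 < a) (hab : a * b = 1) {x : ℝ} (hx : 0 ≤ x) :
    weylRatio a b x ≤ weylConstant a b * a ^ (2 + (√(2 * x + 1) - √(2 * x))) := by
  obtain ⟨L, hL⟩ := exists_mem_Ico_casimirEigenvalue hx
  refine (weylRatio_mem_Icc ha hab hL).2.trans
    (const_mul_rpow_le_const_mul_rpow ha.le (weylConstant_pos ha hab).le ?_)
  linarith [two_mul_add_one_le_sqrt hL.1]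

lemma le_weylRatio (ha : 1 < a) (hab : a * b = 1) {x : ℝ} (hx : 0 ≤ x) :
    weylConstant a b - 2 * a * weylConstant a b * a ^ (-√(2 * x)) ≤ weylRatio a b x := by
  obtain ⟨L, hL⟩ := exists_mem_Ico_casimirEigenvalue hx
  have hmain : weylConstant a b * a ^ (0 : ℝ) ≤ weylConstant a b * a ^ (2 * L + 3 - √(2 * x)) :=
    const_mul_rpow_le_const_mul_rpow ha.le (weylConstant_pos ha hab).le
      (by linarith [sqrt_two_mul_le hL.2])
  rw [Real.rpow_zero, mul_one] at hmain
  linarith [(weylRatio_mem_Icc ha hab hL).1]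

lemma le_weylRatio_casimirEigenvalue (ha : 1 < a) (hab : a * b = 1) (L : ℕ) :
    weylConstant a b * a ^ 2 -
        2 * a * weylConstant a b * a ^ (-√(2 * casimirEigenvalue L)) ≤
      weylRatio a b (casimirEigenvalue L) := by
  have hmain : weylConstant a b * a ^ (2 : ℝ) ≤
      weylConstant a b * a ^ (2 * L + 3 - √(2 * casimirEigenvalue L)) :=
    const_mul_rpow_le_const_mul_rpow ha.le (weylConstant_pos ha hab).le
      (by linarith [sqrt_two_mul_casimirEigenvalue_le L])
  rw [Real.rpow_two] at hmain
  have hL := Set.left_mem_Ico.2 (casimirEigenvalue_strictMono L.lt_succ_self)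
  linarith [(weylRatio_mem_Icc ha hab hL).1]

lemma weylRatio_casimirEigenvalue_succ_sub_half_le (ha : 1 < a) (hab : a * b = 1) (L : ℕ) :
    weylRatio a b (casimirEigenvalue (L + 1) - 1 / 2) ≤
      weylConstant a b * a ^ (0 + (√(2 * (casimirEigenvalue (L + 1) - 1 / 2) + 2) -
        √(2 * (casimirEigenvalue (L + 1) - 1 / 2)))) := by
  refine (weylRatio_mem_Icc ha hab (casimirEigenvalue_succ_sub_half_mem_Ico L)).2.trans
    (const_mul_rpow_le_const_mul_rpow ha.le (weylConstant_pos ha hab).le ?_)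
  have hsqrt : 2 * (L : ℝ) + 3 ≤ √(2 * (casimirEigenvalue (L + 1) - 1 / 2) + 2) :=
    Real.le_sqrt_of_sq_le (by linarith [two_mul_casimirEigenvalue_succ_add_one L])
  linarith

lemma limsup_weylRatio (ha : 1 < a) (hab : a * b = 1) :
    limsup (weylRatio a b) atTop = weylConstant a b * a ^ 2 := by
  have hbound : ∀ᶠ x in atTop,
      weylRatio a b x ≤ weylConstant a b * a ^ (2 + (√(2 * x + 1) - √(2 * x))) :=
    (eventually_ge_atTop 0).mono fun x => weylRatio_le ha hab
  have hupp :=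
    tendsto_const_mul_rpow_add_sqrt_sub_sqrt (one_pos.trans ha).ne' (weylConstant a b) 2 1
  rw [Real.rpow_two] at hupp
  have hlow := (tendsto_const_mul_rpow_neg_sqrt ha (2 * a * weylConstant a b)).const_sub
    (weylConstant a b * a ^ 2)
  rw [sub_zero] at hlow
  have hev := tendsto_casimirEigenvalue_atTop
  exact limsup_eq_of_eventuallyLE_of_tendsto_comp hbound hupp hev
    (tendsto_of_tendsto_of_tendsto_of_le_of_le' (hlow.comp hev) (hupp.comp hev)
      (.of_forall (le_weylRatio_casimirEigenvalue ha hab)) (hev.eventually hbound))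

lemma liminf_weylRatio (ha : 1 < a) (hab : a * b = 1) :
    liminf (weylRatio a b) atTop = weylConstant a b := by
  have hbound : ∀ᶠ x in atTop,
      weylConstant a b - 2 * a * weylConstant a b * a ^ (-√(2 * x)) ≤ weylRatio a b x :=
    (eventually_ge_atTop 0).mono fun x => le_weylRatio ha hab
  have hlow := (tendsto_const_mul_rpow_neg_sqrt ha (2 * a * weylConstant a b)).const_sub
    (weylConstant a b)
  rw [sub_zero] at hlow
  have hupp :=
    tendsto_const_mul_rpow_add_sqrt_sub_sqrt (one_pos.trans ha).ne' (weylConstant a b) 0 2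
  rw [Real.rpow_zero, mul_one] at hupp
  have hev : Tendsto (fun L => casimirEigenvalue (L + 1) - 1 / 2) atTop atTop :=
    tendsto_atTop_add_const_right _ _
      (tendsto_casimirEigenvalue_atTop.comp (tendsto_add_atTop_nat 1))
  exact liminf_eq_of_eventuallyLE_of_tendsto_comp hbound hlow hev
    (tendsto_of_tendsto_of_tendsto_of_le_of_le' (hlow.comp hev) (hupp.comp hev)
      (hev.eventually hbound)
      (.of_forall (weylRatio_casimirEigenvalue_succ_sub_half_le ha hab)))

end WeylRatio

theorem weyl_type_formula_general (t : ℝ) (ht : 2 < t) :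
    let α₁ : ℝ := (t - √(t ^ 2 - 4)) / 2
    let α₂ : ℝ := (t + √(t ^ 2 - 4)) / 2
    let mul : ℕ → ℝ := fun l => (α₂ ^ (2 * l + 1) - α₁ ^ (2 * l + 1)) / (α₂ - α₁)
    let N : ℝ → ℝ := fun lam =>
      ∑' l : ℕ, if 2 * (l : ℝ) ^ 2 + 2 * (l : ℝ) ≤ lam then mul l else 0
    let β : ℝ := 1 / ((α₂ - α₁) * (α₂ ^ 2 - 1))
    0 < β ∧
      limsup (fun lam : ℝ => N lam * α₂ ^ (-√(2 * lam))) atTop = β * α₂ ^ 2 ∧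
      liminf (fun lam : ℝ => N lam * α₂ ^ (-√(2 * lam))) atTop = β := by
  intro α₁ α₂ mul N β
  have hroots : α₂ * α₁ = 1 := by
    have hsq : √(t ^ 2 - 4) ^ 2 = t ^ 2 - 4 := Real.sq_sqrt (by nlinarith)
    simp only [α₁, α₂]
    linear_combination (-1 / 4) * hsq
  have hα₂ : 1 < α₂ := by
    simp only [α₂]
    linarith [Real.sqrt_nonneg (t ^ 2 - 4)]
  exact ⟨weylConstant_pos hα₂ hroots, limsup_weylRatio hα₂ hroots, liminf_weylRatio hα₂ hroots⟩

/-- The non-quasiclassical Weyl-type formula (Proposition 5.3): for the twisted Casimir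
operator on the twisted non-quasiclassical hyperboloid, with eigenvalues
`λ_l = 2l² + 2l` of multiplicities `m_l = (α₂^{2l+1} − α₁^{2l+1})/(α₂ − α₁)`, the
counting function `N(λ)` satisfies
`limsup N(λ)·α₂^{−√(2λ)} = β·α₂²` and `liminf N(λ)·α₂^{−√(2λ)} = β`,
where `β = 1/((α₂ − α₁)(α₂² − 1)) > 0`. -/
theorem weyl_type_formula (n : ℕ) (hn : 3 ≤ n) :
    let α₁ : ℝ := ((n : ℝ) - Real.sqrt ((n : ℝ) ^ 2 - 4)) / 2
    let α₂ : ℝ := ((n : ℝ) + Real.sqrt ((n : ℝ) ^ 2 - 4)) / 2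
    let mul : ℕ → ℝ := fun l => (α₂ ^ (2 * l + 1) - α₁ ^ (2 * l + 1)) / (α₂ - α₁)
    let N : ℝ → ℝ := fun lam =>
      ∑' l : ℕ, if 2 * (l : ℝ) ^ 2 + 2 * (l : ℝ) ≤ lam then mul l else 0
    let β : ℝ := 1 / ((α₂ - α₁) * (α₂ ^ 2 - 1))
    0 < β ∧
      limsup (fun lam : ℝ => N lam * α₂ ^ (-Real.sqrt (2 * lam))) atTop = β * α₂ ^ 2 ∧
      liminf (fun lam : ℝ => N lam * α₂ ^ (-Real.sqrt (2 * lam))) atTop = β :=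
  weyl_type_formula_general n (Nat.ofNat_lt_cast.2 hn)
end
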